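/- arXiv:2505.22384 — 2 statements merged into one kernel-verified Lean document; each statement's English description precedes it below -/
import Mathlib

section
/- Let P be a 𝒞-partition of maximum value of a finite edge-weighted simple graph G. Then P is Nash-stable: for every vertex u, letting C_i denote the part of P containing u, and for every part C_j of P with |C_j| < 𝒞, the total weight of the edges joining u to vertices of C_i is at least the total weight of the edges joining u to vertices of C_j. -/
open scoped Classical

/-- The weight contributed by a single part `Q`: total weight of edges of `G`
with both endpoints in `Q`. -/
noncomputable def partVal {V : Type*} [DecidableEq V] (G : SimpleGraph V)
    (w : Sym2 V → ℕ) (Q : Finset V) : ℕ :=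
  ∑ e ∈ Q.sym2.filter (fun e => e ∈ G.edgeSet), w e

/-- The value of a partition `P` of the vertex set of `G`. -/
noncomputable def pVal {V : Type*} [Fintype V] [DecidableEq V] (G : SimpleGraph V)
    (w : Sym2 V → ℕ) (P : Finpartition (Finset.univ : Finset V)) : ℕ :=
  ∑ Q ∈ P.parts, partVal G w Q

theorem partVal_insert_aux {V : Type*} [DecidableEq V] (G : SimpleGraph V)
    (w : Sym2 V → ℕ) (Q : Finset V) (u : V) (hu : u ∉ Q) :
    partVal G w (insert u Q) =
      partVal G w Q + ∑ v ∈ Q.filter (fun v => G.Adj u v), w s(u, v) := by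
  have hinj : Set.InjOn (fun v => s(u, v)) (Q.filter (fun v => G.Adj u v)) := by
    intro a _ b _ h
    exact Sym2.congr_right.1 h
  have hset : (insert u Q).sym2.filter (fun e => e ∈ G.edgeSet) =
      Q.sym2.filter (fun e => e ∈ G.edgeSet) ∪
        (Q.filter (fun v => G.Adj u v)).image (fun v => s(u, v)) := by
    ext e
    induction e using Sym2.ind with
    | _ a b =>
      have h1 := G.loopless.irrefl u
      have h2 := G.adj_comm a b
      simp only [Finset.mem_filter, Finset.mem_union, Finset.mem_image, Finset.mk_mem_sym2_iff,
        Finset.mem_insert, SimpleGraph.mem_edgeSet, Sym2.eq_iff]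
      constructor
      · rintro ⟨⟨rfl | ha, rfl | hb⟩, hab⟩
        · exact absurd hab h1
        · exact Or.inr ⟨b, ⟨hb, hab⟩, Or.inl ⟨rfl, rfl⟩⟩
        · exact Or.inr ⟨a, ⟨ha, hab.symm⟩, Or.inr ⟨rfl, rfl⟩⟩
        · exact Or.inl ⟨⟨ha, hb⟩, hab⟩
      · rintro (⟨⟨ha, hb⟩, hab⟩ | ⟨v, ⟨hv, huv⟩, ⟨rfl, rfl⟩ | ⟨rfl, rfl⟩⟩)
        · exact ⟨⟨Or.inr ha, Or.inr hb⟩, hab⟩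
        · exact ⟨⟨Or.inl rfl, Or.inr hv⟩, huv⟩
        · exact ⟨⟨Or.inr hv, Or.inl rfl⟩, huv.symm⟩
  have hdis : Disjoint (Q.sym2.filter (fun e => e ∈ G.edgeSet))
      ((Q.filter (fun v => G.Adj u v)).image (fun v => s(u, v))) := by
    rw [Finset.disjoint_right]
    intro e he he'
    obtain ⟨v, hv, rfl⟩ := Finset.mem_image.1 he
    rw [Finset.mem_filter, Finset.mk_mem_sym2_iff] at he'
    exact hu he'.1.1
  unfold partVal
  rw [hset, Finset.sum_union hdis, Finset.sum_image hinj]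

/-- An optimal 𝒞-partition is Nash-stable. -/
theorem stmt0 {V : Type*} [Fintype V] [DecidableEq V] (G : SimpleGraph V)
    (w : Sym2 V → ℕ) (C : ℕ) (hC : 1 ≤ C)
    (P : Finpartition (Finset.univ : Finset V))
    (hP : ∀ Q ∈ P.parts, Q.card ≤ C)
    (hopt : ∀ P' : Finpartition (Finset.univ : Finset V),
      (∀ Q ∈ P'.parts, Q.card ≤ C) → pVal G w P' ≤ pVal G w P) :
    ∀ u : V, ∀ Ci ∈ P.parts, u ∈ Ci → ∀ Cj ∈ P.parts, Cj.card < C →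
      ∑ v ∈ Cj.filter (fun v => G.Adj u v), w s(u, v) ≤
        ∑ v ∈ Ci.filter (fun v => G.Adj u v), w s(u, v) := by
  intro u Ci hCi hu Cj hCj hcard
  by_cases hij : Ci = Cj
  · subst hij; exact le_rfl
  have huniq : ∀ A ∈ P.parts, ∀ B ∈ P.parts, ∀ x, x ∈ A → x ∈ B → A = B :=
    fun A hA B hB x hxA hxB => P.eq_of_mem_parts hA hB hxA hxB
  have huj : u ∉ Cj := fun h => hij (huniq _ hCi _ hCj u hu h)
  have hne : ∅ ∉ P.parts := P.bot_notMem
  set R := (P.parts.erase Ci).erase Cj with hR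
  have hRm : ∀ A, A ∈ R ↔ A ≠ Cj ∧ A ≠ Ci ∧ A ∈ P.parts := by
    intro A; simp [hR]
  have hiR : Ci.erase u ∉ R := by
    intro h
    obtain ⟨_, h2, h3⟩ := (hRm _).1 h
    obtain ⟨x, hx⟩ := Finset.nonempty_iff_ne_empty.2 (fun h0 => hne (h0 ▸ h3))
    exact h2 (huniq _ h3 _ hCi x hx (Finset.mem_of_mem_erase hx))
  have hjR : insert u Cj ∉ insert (Ci.erase u) R := by
    intro h
    rcases Finset.mem_insert.1 h with h | h
    · have := Finset.mem_insert_self u Cj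
      rw [h] at this
      simp at this
    · obtain ⟨_, h2, h3⟩ := (hRm _).1 h
      exact h2 (huniq _ h3 _ hCi u (Finset.mem_insert_self _ _) hu)
  let S : Finset (Finset V) := insert (insert u Cj) (insert (Ci.erase u) R)
  have hSm : ∀ A, A ∈ S ↔ A = insert u Cj ∨ A = Ci.erase u ∨ A ∈ R := by
    intro A; simp [S]
  have hSd : S.SupIndep id := by
    rw [Finset.supIndep_iff_pairwiseDisjoint]
    intro A hA B hB hAB
    have hA := (hSm A).1 hA
    have hB := (hSm B).1 hB
    change Disjoint A B
    rw [Finset.disjoint_left]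
    intro x hxA hxB
    apply hAB
    simp only [hRm] at hA hB
    rcases hA with rfl | rfl | ⟨a1, a2, a3⟩ <;> rcases hB with rfl | rfl | ⟨b1, b2, b3⟩ <;>
      (try simp only [Finset.mem_insert, Finset.mem_erase] at hxA hxB) <;> grind
  have hSs : S.sup id = Finset.univ := by
    ext x
    simp only [Finset.mem_sup, id, Finset.mem_univ, iff_true]
    obtain ⟨A, hA, hxA⟩ := P.exists_mem (Finset.mem_univ x)
    simp only [hSm, hRm]
    by_cases hxu : x = u
    · exact ⟨_, Or.inl rfl, by simp [hxu]⟩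
    by_cases h1 : A = Ci
    · exact ⟨_, Or.inr (Or.inl rfl), by simp [hxu, ← h1, hxA]⟩
    by_cases h2 : A = Cj
    · exact ⟨_, Or.inl rfl, by simp [← h2, hxA]⟩
    exact ⟨A, Or.inr (Or.inr ⟨h2, h1, hA⟩), hxA⟩
  have key := hopt (Finpartition.ofErase S hSd hSs) (by
    intro Q hQ
    have hQ : Q ∈ S := Finset.mem_of_mem_erase hQ
    rcases (hSm Q).1 hQ with rfl | rfl | h
    · rw [Finset.card_insert_of_notMem huj]; exact hcard
    · exact (Finset.card_le_card (Finset.erase_subset _ _)).trans (hP _ hCi)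
    · exact hP _ ((hRm _).1 h).2.2)
  have hv1 : pVal G w (Finpartition.ofErase S hSd hSs) = ∑ Q ∈ S, partVal G w Q := by
    unfold pVal
    refine Finset.sum_subset (Finset.erase_subset _ _) ?_
    intro Q hQ hQ'
    have : Q = ∅ := by
      by_contra h
      exact hQ' (Finset.mem_erase.2 ⟨h, hQ⟩)
    subst this
    simp [partVal]
  have hv2 : ∑ Q ∈ S, partVal G w Q =
      partVal G w (insert u Cj) + (partVal G w (Ci.erase u) + ∑ Q ∈ R, partVal G w Q) := by
    rw [Finset.sum_insert hjR, Finset.sum_insert hiR]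
  have hv3 : pVal G w P = partVal G w Ci + (partVal G w Cj + ∑ Q ∈ R, partVal G w Q) := by
    unfold pVal
    rw [Finset.add_sum_erase _ _ (Finset.mem_erase.2 ⟨Ne.symm hij, hCj⟩),
      Finset.add_sum_erase _ _ hCi]
  have e1 := partVal_insert_aux G w Cj u huj
  have e2 := partVal_insert_aux G w (Ci.erase u) u (Finset.notMem_erase _ _)
  rw [Finset.insert_erase hu] at e2
  have e3 : (Ci.erase u).filter (fun v => G.Adj u v) = Ci.filter (fun v => G.Adj u v) := by
    ext v
    simp only [Finset.mem_filter, Finset.mem_erase]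
    exact ⟨fun h => ⟨h.1.2, h.2⟩, fun h => ⟨⟨h.2.ne', h.1⟩, h.2⟩⟩
  rw [e3] at e2
  omega
end

section
/- Let g : ℕ → ℕ satisfy g(0) = 0, g(1) = 1, g(2) = 3, g(3) = 5 and g(4) = 8, and fix p, x ∈ ℕ with x ≤ 4p. Over all functions f : Fin p → ℕ with f(i) ≤ 4 for every i and Σ_{i} f(i) = x, the maximum of Σ_{i} g(f(i)) equals 2x if 4 divides x, and 2x − 1 otherwise. Moreover, every maximizing f has no index i with f(i) ∈ {1, 2, 3} when 4 divides x, and exactly one such index otherwise. -/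
theorem stmt11_exists (g : ℕ → ℕ) (hg0 : g 0 = 0) (hg1 : g 1 = 1) (hg2 : g 2 = 3)
    (hg3 : g 3 = 5) (hg4 : g 4 = 8) (p : ℕ) : ∀ x : ℕ, x ≤ 4 * p →
    ∃ f : Fin p → ℕ, (∀ i, f i ≤ 4) ∧ (∑ i, f i = x) ∧
      (if 4 ∣ x then 2 * x else 2 * x - 1) = ∑ i, g (f i) := by
  induction p with
  | zero =>
    intro x hx
    obtain rfl : x = 0 := by omega
    exact ⟨fun _ => 0, by simp, by simp, by simp⟩
  | succ p ih =>
    intro x hx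
    by_cases h : 4 ≤ x
    · obtain ⟨f, h1, h2, h3⟩ := ih (x - 4) (by omega)
      refine ⟨Fin.cons 4 f, ?_, ?_, ?_⟩
      · intro i
        refine Fin.cases ?_ ?_ i
        · simp
        · simpa using h1
      · simp [Fin.sum_univ_succ, h2]; omega
      · simp only [Fin.sum_univ_succ, Fin.cons_zero, Fin.cons_succ, ← h3, hg4]
        split_ifs <;> omega
    · obtain ⟨f, h1, h2, h3⟩ := ih 0 (by omega)
      refine ⟨Fin.cons x f, ?_, ?_, ?_⟩
      · intro i
        refine Fin.cases ?_ ?_ i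
        · simp; omega
        · simpa using h1
      · simp only [Fin.sum_univ_succ, Fin.cons_zero, Fin.cons_succ, h2]; omega
      · simp only [Fin.sum_univ_succ, Fin.cons_zero, Fin.cons_succ, ← h3]
        have : x < 4 := by omega
        interval_cases x <;> simp [hg0, hg1, hg2, hg3]

theorem stmt11_key (g : ℕ → ℕ) (hg0 : g 0 = 0) (hg1 : g 1 = 1) (hg2 : g 2 = 3)
    (hg3 : g 3 = 5) (hg4 : g 4 = 8) (p x : ℕ) (f : Fin p → ℕ) (hf : ∀ i, f i ≤ 4)
    (hs : ∑ i, f i = x) :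
    ∑ i, g (f i) + (Finset.univ.filter (fun i => f i = 1 ∨ f i = 2 ∨ f i = 3)).card = 2 * x := by
  rw [Finset.card_filter, ← Finset.sum_add_distrib, ← hs, Finset.mul_sum]
  refine Finset.sum_congr rfl fun i _ => ?_
  have := hf i
  generalize f i = k at *
  interval_cases k <;> simp [hg0, hg1, hg2, hg3, hg4]

theorem stmt11_dvd (p x : ℕ) (f : Fin p → ℕ) (hf : ∀ i, f i ≤ 4) (hs : ∑ i, f i = x)
    (hc : (Finset.univ.filter (fun i => f i = 1 ∨ f i = 2 ∨ f i = 3)).card = 0) : 4 ∣ x := by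
  rw [← hs]
  refine Finset.dvd_sum fun i _ => ?_
  rw [Finset.card_eq_zero, Finset.filter_eq_empty_iff] at hc
  have h1 := hc (Finset.mem_univ i)
  have h2 := hf i
  omega

/-- Optimal distribution of `x` connector vertices among `p` edge gadgets,
where placing `i` of the four connectors of a gadget with it gains `g i` edges
(`g 0 = 0`, `g 1 = 1`, `g 2 = 3`, `g 3 = 5`, `g 4 = 8`): the maximum total gain
is `2x` when `4 ∣ x` and `2x − 1` otherwise, and a maximizing distribution has
no gadget receiving `1`, `2` or `3` connectors when `4 ∣ x`, and exactly one
such gadget otherwise. -/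
theorem stmt11 (g : ℕ → ℕ) (hg0 : g 0 = 0) (hg1 : g 1 = 1) (hg2 : g 2 = 3)
    (hg3 : g 3 = 5) (hg4 : g 4 = 8) (p x : ℕ) (hx : x ≤ 4 * p) :
    IsGreatest {t : ℕ | ∃ f : Fin p → ℕ,
        (∀ i, f i ≤ 4) ∧ (∑ i, f i = x) ∧ t = ∑ i, g (f i)}
      (if 4 ∣ x then 2 * x else 2 * x - 1) ∧
    ∀ f : Fin p → ℕ, (∀ i, f i ≤ 4) → (∑ i, f i = x) →
      (∑ i, g (f i) = if 4 ∣ x then 2 * x else 2 * x - 1) →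
      (Finset.univ.filter (fun i => f i = 1 ∨ f i = 2 ∨ f i = 3)).card =
        if 4 ∣ x then 0 else 1 := by
  refine ⟨⟨stmt11_exists g hg0 hg1 hg2 hg3 hg4 p x hx, ?_⟩, ?_⟩
  · rintro t ⟨f, hf, hs, rfl⟩
    have h1 := stmt11_key g hg0 hg1 hg2 hg3 hg4 p x f hf hs
    have h2 := stmt11_dvd p x f hf hs
    split_ifs with h
    · omega
    · have h3 := mt h2 h
      omega
  · intro f hf hs he
    have h1 := stmt11_key g hg0 hg1 hg2 hg3 hg4 p x f hf hs
    split_ifs at he ⊢ with h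
    · omega
    · have : x ≠ 0 := by rintro rfl; simp at h
      omega
end
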